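/- arXiv:2502.08773 — 3 statements merged into one kernel-verified Lean document; each statement's English description precedes it below -/
import Mathlib

section
/- Let (X, 𝒜, μ) be a probability space, M ∈ ℕ with M ≥ 1, e : X → Fin M → ℝ with x ↦ e x m integrable for each m, c : Fin M → ℝ, and λ ≥ 0. Suppose r⋆ : X → Fin M is measurable and satisfies e x (r⋆ x) + λ·c (r⋆ x) ≤ e x m + λ·c m for every x ∈ X and every m ∈ Fin M. Then for every measurable router r : X → Fin M whose routed cost satisfies ∫ c (r x) dμ(x) ≤ ∫ c (r⋆ x) dμ(x), one has ∫ e x (r⋆ x) dμ(x) ≤ ∫ e x (r x) dμ(x). In other words, the router that routes each input to the model with the smallest cost-adjusted conditional expected loss minimizes the routed risk among all routers of no larger routed cost. -/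
open MeasureTheory

/-!
The multiplier `lam` prices cost in units of loss. Integrating the pointwise optimality of `rstar`
shows that it minimizes the Lagrangian `S + lam * C` over all routers. Against a router of no larger
cost, the term `lam * C` can only help the competitor, so the inequality must come from `S`.
-/

section

variable {X ι E : Type*} [MeasurableSpace X] {μ : Measure X}

theorem integrable_apply_of_finite [MeasurableSpace ι] [Finite ι] [MeasurableSingletonClass ι]
    [NormedAddCommGroup E] {f : X → ι → E} (hf : ∀ i, Integrable (fun x => f x i) μ)
    {r : X → ι} (hr : AEMeasurable r μ) : Integrable (fun x => f x (r x)) μ := by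
  have fibers_cover : ⋃ i, r ⁻¹' {i} = Set.univ := by
    rw [← Set.preimage_iUnion, Set.iUnion_of_singleton, Set.preimage_univ]
  rw [← integrableOn_univ, ← fibers_cover, integrableOn_finite_iUnion]
  intro i
  have hfiber : NullMeasurableSet (r ⁻¹' {i}) μ :=
    hr.nullMeasurableSet_preimage (measurableSet_singleton i)
  refine (hf i).integrableOn.congr ?_
  filter_upwards [ae_restrict_mem₀ hfiber] with x hx
  rw [Set.mem_singleton_iff.mp hx]

theorem integral_le_integral_of_ae_add_const_mul_le {f₁ f₂ g₁ g₂ : X → ℝ} {lam : ℝ}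
    (hf₁ : Integrable f₁ μ) (hf₂ : Integrable f₂ μ) (hg₁ : Integrable g₁ μ)
    (hg₂ : Integrable g₂ μ) (hlam : 0 ≤ lam)
    (hle : ∀ᵐ x ∂μ, f₁ x + lam * g₁ x ≤ f₂ x + lam * g₂ x)
    (hg : ∫ x, g₂ x ∂μ ≤ ∫ x, g₁ x ∂μ) :
    ∫ x, f₁ x ∂μ ≤ ∫ x, f₂ x ∂μ := by
  have lagrangian_le :
      ∫ x, f₁ x ∂μ + lam * ∫ x, g₁ x ∂μ ≤ ∫ x, f₂ x ∂μ + lam * ∫ x, g₂ x ∂μ :=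
    calc ∫ x, f₁ x ∂μ + lam * ∫ x, g₁ x ∂μ
        = ∫ x, f₁ x + lam * g₁ x ∂μ := by
          rw [integral_add hf₁ (hg₁.const_mul lam), integral_const_mul]
      _ ≤ ∫ x, f₂ x + lam * g₂ x ∂μ :=
          integral_mono_ae (hf₁.add (hg₁.const_mul lam)) (hf₂.add (hg₂.const_mul lam)) hle
      _ = ∫ x, f₂ x ∂μ + lam * ∫ x, g₂ x ∂μ := by
          rw [integral_add hf₂ (hg₂.const_mul lam), integral_const_mul]
  have cost_le : lam * ∫ x, g₂ x ∂μ ≤ lam * ∫ x, g₁ x ∂μ := mul_le_mul_of_nonneg_left hg hlam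
  linarith

theorem costAdjusted_pointwise_optimal_router_minimizes_risk_general
    [MeasurableSpace ι] [Finite ι] [MeasurableSingletonClass ι] {e c : X → ι → ℝ}
    (he : ∀ m, Integrable (fun x => e x m) μ) (hc : ∀ m, Integrable (fun x => c x m) μ)
    {lam : ℝ} (hlam : 0 ≤ lam) {rstar r : X → ι}
    (hrstar : AEMeasurable rstar μ) (hr : AEMeasurable r μ)
    (hopt : ∀ᵐ x ∂μ, ∀ m, e x (rstar x) + lam * c x (rstar x) ≤ e x m + lam * c x m)
    (hcost : ∫ x, c x (r x) ∂μ ≤ ∫ x, c x (rstar x) ∂μ) :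
    ∫ x, e x (rstar x) ∂μ ≤ ∫ x, e x (r x) ∂μ :=
  integral_le_integral_of_ae_add_const_mul_le
    (integrable_apply_of_finite he hrstar) (integrable_apply_of_finite he hr)
    (integrable_apply_of_finite hc hrstar) (integrable_apply_of_finite hc hr)
    hlam (hopt.mono fun x hx => hx (r x)) hcost

end

/-- The router that routes each input to the model with the smallest cost-adjusted
conditional expected loss minimizes the routed risk among all routers of no larger
routed cost. -/
theorem costAdjusted_pointwise_optimal_router_minimizes_risk
    {X : Type*} [MeasurableSpace X] (μ : Measure X) [IsProbabilityMeasure μ]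
    (M : ℕ) (hM : 1 ≤ M) (e : X → Fin M → ℝ)
    (hint : ∀ m : Fin M, Integrable (fun x => e x m) μ)
    (c : Fin M → ℝ) (lam : ℝ) (hlam : 0 ≤ lam)
    (rstar : X → Fin M) (hrstar : Measurable rstar)
    (hopt : ∀ x : X, ∀ m : Fin M,
      e x (rstar x) + lam * c (rstar x) ≤ e x m + lam * c m) :
    ∀ r : X → Fin M, Measurable r →
      (∫ x, c (r x) ∂μ) ≤ (∫ x, c (rstar x) ∂μ) →
      ∫ x, e x (rstar x) ∂μ ≤ ∫ x, e x (r x) ∂μ :=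
  fun _ hr => costAdjusted_pointwise_optimal_router_minimizes_risk_general hint
    (fun m => integrable_const (c m)) hlam hrstar.aemeasurable hr.aemeasurable (.of_forall hopt)
end

section
/- Let X be a set, M ∈ ℕ with M ≥ 1, e : X → Fin M → ℝ, and c : Fin M → ℝ an injective cost function. Let 0 ≤ λ ≤ λ', and let r_λ, r_{λ'} : X → Fin M satisfy, for every x ∈ X and every m ∈ Fin M, e x (r_λ x) + λ·c (r_λ x) ≤ e x m + λ·c m and e x (r_{λ'} x) + λ'·c (r_{λ'} x) ≤ e x m + λ'·c m. Then the disagreement set {x : r_λ x ≠ r_{λ'} x} is contained in the union over ordered pairs m ≠ k in Fin M of the sets {x : λ ≤ (e x k − e x m)/(c m − c k) ≤ λ'}. -/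
/-!
As functions of the trade-off, the cost-adjusted losses of two models `m` and `k` are lines of
slopes `c m` and `c k`. If `m` wins at `lam` and `k` wins at a larger `lam'`, then `m` is the
costlier of the two, and the lines cross between `lam` and `lam'`; if both win at the same
trade-off, the lines cross exactly there. Applied to the two routers' choices at an input where they
disagree, this puts the crossing value of that pair in `[lam, lam']`.
-/

section Crossing

variable {ι 𝕜 : Type*}

/-- The objective `a m + lam * c m` minimized by a router, where `a` lists the losses of the
models on one fixed input and `c` their costs. -/
def costAdjustedLoss [Add 𝕜] [Mul 𝕜] (a c : ι → 𝕜) (lam : 𝕜) (m : ι) : 𝕜 :=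
  a m + lam * c m

/-- The trade-off at which the models `m` and `k`, with losses `a` and costs `c`, have equal
cost-adjusted losses. It is meaningful only for `c m ≠ c k`: otherwise the quotient is `0`. -/
def crossingValue [Sub 𝕜] [Div 𝕜] (a c : ι → 𝕜) (m k : ι) : 𝕜 :=
  (a k - a m) / (c m - c k)

theorem costAdjustedLoss_eq_iff_crossingValue_eq [Field 𝕜] {a c : ι → 𝕜} {lam : 𝕜} {m k : ι}
    (hc : c m ≠ c k) :
    costAdjustedLoss a c lam m = costAdjustedLoss a c lam k ↔ crossingValue a c m k = lam := by
  rw [costAdjustedLoss, costAdjustedLoss, crossingValue, div_eq_iff (sub_ne_zero.mpr hc)]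
  constructor <;> intro h <;> linear_combination -h

variable [Field 𝕜] [LinearOrder 𝕜] [IsStrictOrderedRing 𝕜]
variable {a c : ι → 𝕜} {lam lam' : 𝕜} {m k : ι}

theorem costAdjustedLoss_le_iff_le_crossingValue (hc : c k < c m) :
    costAdjustedLoss a c lam m ≤ costAdjustedLoss a c lam k ↔ lam ≤ crossingValue a c m k := by
  rw [costAdjustedLoss, costAdjustedLoss, crossingValue, le_div_iff₀ (sub_pos.mpr hc)]
  constructor <;> intro h <;> linarith

theorem costAdjustedLoss_le_iff_crossingValue_le (hc : c k < c m) :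
    costAdjustedLoss a c lam k ≤ costAdjustedLoss a c lam m ↔ crossingValue a c m k ≤ lam := by
  rw [costAdjustedLoss, costAdjustedLoss, crossingValue, div_le_iff₀ (sub_pos.mpr hc)]
  constructor <;> intro h <;> linarith

theorem cost_le_cost_of_costAdjustedLoss_le (hlt : lam < lam')
    (hm : costAdjustedLoss a c lam m ≤ costAdjustedLoss a c lam k)
    (hk : costAdjustedLoss a c lam' k ≤ costAdjustedLoss a c lam' m) :
    c k ≤ c m := by
  unfold costAdjustedLoss at hm hk
  have hmul : (lam' - lam) * c k ≤ (lam' - lam) * c m := by linarith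
  exact le_of_mul_le_mul_left hmul (sub_pos.mpr hlt)

theorem crossingValue_mem_Icc (hc : c m ≠ c k) (hle : lam ≤ lam')
    (hm : costAdjustedLoss a c lam m ≤ costAdjustedLoss a c lam k)
    (hk : costAdjustedLoss a c lam' k ≤ costAdjustedLoss a c lam' m) :
    crossingValue a c m k ∈ Set.Icc lam lam' := by
  rcases hle.eq_or_lt with rfl | hlt
  · rw [Set.Icc_self, Set.mem_singleton_iff]
    exact (costAdjustedLoss_eq_iff_crossingValue_eq hc).mp (le_antisymm hm hk)
  · have hcost : c k < c m :=
      lt_of_le_of_ne (cost_le_cost_of_costAdjustedLoss_le hlt hm hk) hc.symm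
    exact ⟨(costAdjustedLoss_le_iff_le_crossingValue hcost).mp hm,
      (costAdjustedLoss_le_iff_crossingValue_le hcost).mp hk⟩

theorem disagreement_subset_crossing_union_general {X : Type*} {e : X → ι → 𝕜}
    (hc : Function.Injective c) (hle : lam ≤ lam') {rl rl' : X → ι}
    (hrl : ∀ x m, costAdjustedLoss (e x) c lam (rl x) ≤ costAdjustedLoss (e x) c lam m)
    (hrl' : ∀ x m, costAdjustedLoss (e x) c lam' (rl' x) ≤ costAdjustedLoss (e x) c lam' m) :
    {x | rl x ≠ rl' x} ⊆
      ⋃ (m : ι) (k : ι) (_ : m ≠ k), {x | crossingValue (e x) c m k ∈ Set.Icc lam lam'} := by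
  intro x hne
  simp only [Set.mem_iUnion]
  exact ⟨rl x, rl' x, hne,
    crossingValue_mem_Icc (hc.ne hne) hle (hrl x (rl' x)) (hrl' x (rl x))⟩

end Crossing

/-- The set of inputs on which the routers at trade-offs `λ ≤ λ'` disagree is covered
by the sets where some pairwise crossing value `(e x k − e x m)/(c m − c k)` lies in
`[λ, λ']`. -/
theorem disagreement_subset_crossing_union
    {X : Type*} (M : ℕ) (hM : 1 ≤ M) (e : X → Fin M → ℝ)
    (c : Fin M → ℝ) (hc : Function.Injective c)
    (lam lam' : ℝ) (hlam : 0 ≤ lam) (hle : lam ≤ lam')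
    (rl rl' : X → Fin M)
    (hrl : ∀ x : X, ∀ m : Fin M,
      e x (rl x) + lam * c (rl x) ≤ e x m + lam * c m)
    (hrl' : ∀ x : X, ∀ m : Fin M,
      e x (rl' x) + lam' * c (rl' x) ≤ e x m + lam' * c m) :
    {x : X | rl x ≠ rl' x} ⊆
      ⋃ (m : Fin M) (k : Fin M) (_ : m ≠ k),
        {x : X | lam ≤ (e x k - e x m) / (c m - c k) ∧
                 (e x k - e x m) / (c m - c k) ≤ lam'} :=
  disagreement_subset_crossing_union_general hc hle hrl hrl'
end

section
/- Let (X, 𝒜, μ) be a probability space, K, M ∈ ℕ with K, M ≥ 1, π : Fin K → ℝ with π k ≥ 0 and Σ_k π k = 1, p : X → Fin K → Fin M → ℝ measurable with values in [0, 1], and q : Fin K → Fin M → ℝ with values in [0, 1]. For a measurable router r : X → Fin M define R(r) = ∫ Σ_k π k · p x k (r x) dμ(x) and R̃(r) = ∫ Σ_k π k · q k (r x) dμ(x). Suppose r̃ and r are measurable routers with R̃(r̃) ≤ R̃(r). Then R(r̃) ≤ R(r) + 2·∫ max_{m ∈ Fin M, k ∈ Fin K} |p x k m − q k m| dμ(x);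 i.e., the excess true risk of the proxy-optimal router over any competitor is bounded by twice the expected maximal discrepancy between per-input and per-cluster model errors. -/
open MeasureTheory

/-! A router's true and proxy risks differ by at most the expected maximal discrepancy `∫ Δ`,
because at each input the two mixture errors of the chosen model are averages over clusters of
quantities at distance at most `Δ`. Passing from the true to the proxy risk of `r̃`, comparing
proxy risks, and passing back to the true risk of `r` costs `∫ Δ` twice. -/

theorem abs_sum_mul_le_iSup_abs {κ : Type*} [Fintype κ] {w : κ → ℝ} (hw0 : ∀ k, 0 ≤ w k)
    (hw1 : ∑ k, w k ≤ 1) (f : κ → ℝ) : |∑ k, w k * f k| ≤ ⨆ k, |f k| :=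
  calc |∑ k, w k * f k| ≤ ∑ k, |w k * f k| := Finset.abs_sum_le_sum_abs _ _
    _ = ∑ k, w k * |f k| := by simp only [abs_mul, abs_of_nonneg (hw0 _)]
    _ ≤ ∑ k, w k * ⨆ j, |f j| := Finset.sum_le_sum fun k _ =>
        mul_le_mul_of_nonneg_left (le_ciSup (Set.finite_range fun j => |f j|).bddAbove k) (hw0 k)
    _ = (∑ k, w k) * ⨆ j, |f j| := (Finset.sum_mul ..).symm
    _ ≤ ⨆ k, |f k| := mul_le_of_le_one_left (Real.iSup_nonneg fun k => abs_nonneg (f k)) hw1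

theorem abs_iSup_le_sum_abs {ι : Type*} [Fintype ι] (f : ι → ℝ) : |⨆ i, f i| ≤ ∑ i, |f i| := by
  cases isEmpty_or_nonempty ι
  · simp
  · obtain ⟨i, hi⟩ := exists_eq_ciSup_of_finite (f := f)
    rw [← hi]
    exact Finset.single_le_sum (f := fun j => |f j|) (fun j _ => abs_nonneg (f j))
      (Finset.mem_univ i)

section Integrability

variable {X ι : Type*} [MeasurableSpace X] {μ : Measure X} [Finite ι]

theorem integrable_iSup_of_finite {f : ι → X → ℝ} (hf : ∀ i, Integrable (f i) μ) :
    Integrable (fun x => ⨆ i, f i x) μ := by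
  have := Fintype.ofFinite ι
  have hsum : Integrable (fun x => ∑ i, |f i x|) μ := integrable_finsetSum _ fun i _ => (hf i).abs
  exact hsum.mono' (AEMeasurable.iSup fun i => (hf i).aemeasurable).aestronglyMeasurable
    (ae_of_all μ fun x => abs_iSup_le_sum_abs fun i => f i x)

theorem integrable_apply_of_measurable_index {E : Type*} [NormedAddCommGroup E]
    [MeasurableSpace ι] [MeasurableSingletonClass ι] {f : ι → X → E}
    (hf : ∀ i, Integrable (f i) μ) {s : X → ι} (hs : Measurable s) :
    Integrable (fun x => f (s x) x) μ := by
  classical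
  have := Fintype.ofFinite ι
  have hsplit : (fun x => f (s x) x) = fun x => ∑ i, (s ⁻¹' {i}).indicator (f i) x := by
    ext x
    simp [Set.indicator_apply]
  rw [hsplit]
  exact integrable_finsetSum _ fun i _ => (hf i).indicator (hs (measurableSet_singleton i))

end Integrability

section Routing

variable {X κ ι : Type*}

/-- The maximal discrepancy `max_{m, k} |p x k m - q x k m|` at the input `x` between two error
models, for clusters `k : κ` and models `m : ι`. Cluster-average errors are encoded as a `q` that
is constant in `x`. -/
noncomputable def maxDiscrepancy (p q : X → κ → ι → ℝ) (x : X) : ℝ :=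
  ⨆ m, ⨆ k, |p x k m - q x k m|

theorem abs_mixture_sub_mixture_le_maxDiscrepancy [Fintype κ] [Finite ι] {π : κ → ℝ}
    (hπ0 : ∀ k, 0 ≤ π k) (hπ1 : ∑ k, π k ≤ 1) (p q : X → κ → ι → ℝ) (x : X) (m : ι) :
    |∑ k, π k * p x k m - ∑ k, π k * q x k m| ≤ maxDiscrepancy p q x := by
  rw [← Finset.sum_sub_distrib]
  simp only [← mul_sub]
  exact (abs_sum_mul_le_iSup_abs hπ0 hπ1 _).trans
    (le_ciSup (f := fun m => ⨆ k, |p x k m - q x k m|) (Set.finite_range _).bddAbove m)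

variable [MeasurableSpace X] {μ : Measure X}

theorem integrable_maxDiscrepancy [Finite κ] [Finite ι] {p q : X → κ → ι → ℝ}
    (hp : ∀ k m, Integrable (fun x => p x k m) μ) (hq : ∀ k m, Integrable (fun x => q x k m) μ) :
    Integrable (maxDiscrepancy p q) μ :=
  integrable_iSup_of_finite fun m => integrable_iSup_of_finite fun k => ((hp k m).sub (hq k m)).abs

variable [Fintype κ]

/-- The risk of the router `r` under mixture weights `π` and error probabilities `p`. The true risk
`R` and the proxy risk `R̃` are both instances, the latter with `p` constant in the input. -/
noncomputable def routerRisk (μ : Measure X) (π : κ → ℝ) (p : X → κ → ι → ℝ) (r : X → ι) : ℝ :=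
  ∫ x, ∑ k, π k * p x k (r x) ∂μ

variable [Finite ι] [MeasurableSpace ι] [MeasurableSingletonClass ι]

theorem integrable_mixture_comp_router (π : κ → ℝ) {p : X → κ → ι → ℝ}
    (hp : ∀ k m, Integrable (fun x => p x k m) μ) {r : X → ι} (hr : Measurable r) :
    Integrable (fun x => ∑ k, π k * p x k (r x)) μ :=
  integrable_finsetSum _ fun k _ =>
    (integrable_apply_of_measurable_index (hp k) hr).const_mul (π k)

variable {π : κ → ℝ} {p q : X → κ → ι → ℝ}

theorem abs_routerRisk_sub_routerRisk_le (hπ0 : ∀ k, 0 ≤ π k) (hπ1 : ∑ k, π k ≤ 1)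
    (hp : ∀ k m, Integrable (fun x => p x k m) μ) (hq : ∀ k m, Integrable (fun x => q x k m) μ)
    {r : X → ι} (hr : Measurable r) :
    |routerRisk μ π p r - routerRisk μ π q r| ≤ ∫ x, maxDiscrepancy p q x ∂μ := by
  rw [routerRisk, routerRisk, ← integral_sub (integrable_mixture_comp_router π hp hr)
    (integrable_mixture_comp_router π hq hr), ← Real.norm_eq_abs]
  exact norm_integral_le_of_norm_le (integrable_maxDiscrepancy hp hq)
    (ae_of_all μ fun x => abs_mixture_sub_mixture_le_maxDiscrepancy hπ0 hπ1 p q x (r x))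

theorem excess_risk_bound_cluster_routing_general (hπ0 : ∀ k, 0 ≤ π k) (hπ1 : ∑ k, π k ≤ 1)
    (hp : ∀ k m, Integrable (fun x => p x k m) μ) (hq : ∀ k m, Integrable (fun x => q x k m) μ)
    {rt r : X → ι} (hrt : Measurable rt) (hr : Measurable r)
    (hproxy : routerRisk μ π q rt ≤ routerRisk μ π q r) :
    routerRisk μ π p rt ≤ routerRisk μ π p r + 2 * ∫ x, maxDiscrepancy p q x ∂μ := by
  have hrt_dev := abs_le.1 (abs_routerRisk_sub_routerRisk_le hπ0 hπ1 hp hq hrt)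
  have hr_dev := abs_le.1 (abs_routerRisk_sub_routerRisk_le hπ0 hπ1 hp hq hr)
  linarith [hrt_dev.2, hr_dev.1]

end Routing

/-- Excess risk bound: if `r̃` has proxy risk at most that of `r`, then its true risk
exceeds that of `r` by at most twice the expected maximal discrepancy between
per-input and per-cluster model errors. -/
theorem excess_risk_bound_cluster_routing
    {X : Type*} [MeasurableSpace X] (μ : Measure X) [IsProbabilityMeasure μ]
    (K M : ℕ) (hK : 1 ≤ K) (hM : 1 ≤ M)
    (π : Fin K → ℝ) (hπ0 : ∀ k, 0 ≤ π k) (hπ1 : ∑ k : Fin K, π k = 1)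
    (p : X → Fin K → Fin M → ℝ)
    (hpmeas : ∀ (k : Fin K) (m : Fin M), Measurable fun x => p x k m)
    (hp : ∀ x k m, p x k m ∈ Set.Icc (0:ℝ) 1)
    (q : Fin K → Fin M → ℝ) (hq : ∀ k m, q k m ∈ Set.Icc (0:ℝ) 1)
    (rt r : X → Fin M) (hrt : Measurable rt) (hr : Measurable r)
    (hproxy : (∫ x, ∑ k : Fin K, π k * q k (rt x) ∂μ) ≤
      ∫ x, ∑ k : Fin K, π k * q k (r x) ∂μ) :
    (∫ x, ∑ k : Fin K, π k * p x k (rt x) ∂μ) ≤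
      (∫ x, ∑ k : Fin K, π k * p x k (r x) ∂μ) +
        2 * ∫ x, ⨆ m : Fin M, ⨆ k : Fin K, |p x k m - q k m| ∂μ :=
  excess_risk_bound_cluster_routing_general hπ0 hπ1.le
    (fun k m => .of_mem_Icc 0 1 (hpmeas k m).aemeasurable (ae_of_all μ fun x => hp x k m))
    (fun k m => integrable_const (q k m)) hrt hr hproxy
end
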